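/- Let K ⊆ ℝ be a set, n ∈ ℕ, and f ∈ C^{2n+1}(ℝ) with f|_K = 0. Then for every ε > 0 there exists g ∈ C^∞(ℝ) with g|_K = 0 and sup_{j≤n, |x|≤n} |f^{(j)}(x) - g^{(j)}(x)| < ε. (Reducedness of the spectrum of vanishing ideals: the closure of I_K^∞ in the C^n topology contains I_K^{2n+1}.) -/

import Mathlib

open Set Filter Topology

lemma acc_zero_deriv {h : ℝ → ℝ} (hd : Differentiable ℝ h) {p : ℝ}
    (ha : AccPt p (𝓟 {x | h x = 0})) :
    h p = 0 ∧ AccPt p (𝓟 {x | deriv h x = 0}) := by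
  have h0 : h p = 0 := by
    have hc : IsClosed {x | h x = 0} := isClosed_eq hd.continuous continuous_const
    exact hc.closure_subset (mem_closure_iff_clusterPt.2 ha.clusterPt)
  refine ⟨h0, ?_⟩
  rw [accPt_iff_nhds] at ha ⊢
  intro U hU
  obtain ⟨r, hr, hrU⟩ := Metric.mem_nhds_iff.1 hU
  obtain ⟨y, ⟨hy1, hy2⟩, hyp⟩ := ha _ (Metric.ball_mem_nhds p hr)
  simp only [Metric.mem_ball, Real.dist_eq, mem_ofPred_eq] at hy1 hy2
  rw [abs_lt] at hy1
  rcases lt_or_gt_of_ne hyp with hlt | hlt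
  · obtain ⟨c, hc, hc0⟩ := exists_deriv_eq_zero (f := h) hlt hd.continuous.continuousOn (by rw [h0, hy2])
    refine ⟨c, ⟨hrU ?_, hc0⟩, hc.2.ne⟩
    rw [Metric.mem_ball, Real.dist_eq, abs_lt]
    constructor <;> linarith [hc.1, hc.2]
  · obtain ⟨c, hc, hc0⟩ := exists_deriv_eq_zero (f := h) hlt hd.continuous.continuousOn (by rw [h0, hy2])
    refine ⟨c, ⟨hrU ?_, hc0⟩, hc.1.ne'⟩
    rw [Metric.mem_ball, Real.dist_eq, abs_lt]
    constructor <;> linarith [hc.1, hc.2]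

lemma acc_flat {f : ℝ → ℝ} {n : ℕ} (hf : ContDiff ℝ (n + 1 : ℕ) f) {K : Set ℝ}
    (hK : ∀ x ∈ K, f x = 0) {p : ℝ} (hp : AccPt p (𝓟 K)) :
    ∀ i ≤ n, iteratedDeriv i f p = 0 := by
  have key : ∀ i ≤ n, AccPt p (𝓟 {x | iteratedDeriv i f x = 0}) := by
    intro i
    induction i with
    | zero =>
      intro _
      refine hp.mono (principal_mono.2 ?_)
      intro x hx
      simpa using hK x hx
    | succ i ih =>
      intro hi
      rw [iteratedDeriv_succ]
      exact (acc_zero_deriv (hf.differentiable_iteratedDeriv i (by exact_mod_cast (by omega)))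
        (ih (by omega))).2
  intro i hi
  exact (acc_zero_deriv (hf.differentiable_iteratedDeriv i (by exact_mod_cast (by omega)))
        (key i hi)).1

lemma taylor_bound {f : ℝ → ℝ} {n : ℕ} (hf : ContDiff ℝ (n + 1 : ℕ) f) {p r M : ℝ}
    (hr : 0 ≤ r) (hM0 : 0 ≤ M)
    (hp : ∀ i ≤ n, iteratedDeriv i f p = 0)
    (hM : ∀ y, |y - p| ≤ r → |iteratedDeriv (n + 1) f y| ≤ M) :
    ∀ i ≤ n + 1, ∀ y, |y - p| ≤ r → |iteratedDeriv (n + 1 - i) f y| ≤ M * r ^ i := by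
  intro i
  induction i with
  | zero => intro _ y hy; simpa using hM y hy
  | succ i ih =>
    intro hi y hy
    have e : n + 1 - i = (n + 1 - (i + 1)) + 1 := by omega
    set m := n + 1 - (i + 1) with hm
    have ih' := ih (by omega)
    rw [e] at ih'
    have := (convex_closedBall p r).norm_image_sub_le_of_norm_deriv_le (𝕜 := ℝ)
      (f := iteratedDeriv m f) (C := M * r ^ i) (x := p) (y := y)
      (fun x _ => (hf.differentiable_iteratedDeriv m (by exact_mod_cast (by omega))) x)
      (fun x hx => by
        rw [← iteratedDeriv_succ]
        exact ih' x (by simpa [Real.dist_eq] using hx))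
      (by simpa using hr) (by simpa [Real.dist_eq] using hy)
    rw [hp m (by omega), sub_zero, Real.norm_eq_abs, Real.norm_eq_abs] at this
    calc _ ≤ _ := this
      _ ≤ M * r ^ i * r := by gcongr
      _ = _ := by ring

lemma leib {u v : ℝ → ℝ} {j : ℕ} (hu : ContDiff ℝ j u) (hv : ContDiff ℝ j v) {x c : ℝ}
    (h : ∀ i ≤ j, |iteratedDeriv i u x| * |iteratedDeriv (j - i) v x| ≤ c) :
    |iteratedDeriv j (u * v) x| ≤ 2 ^ j * c := by
  rw [iteratedDeriv_mul hu.contDiffAt hv.contDiffAt]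
  refine (Finset.abs_sum_le_sum_abs _ _).trans ?_
  have : (2 : ℝ) ^ j = ∑ i ∈ Finset.range (j + 1), (j.choose i : ℝ) := by
    exact_mod_cast (Nat.sum_range_choose j).symm
  rw [this, Finset.sum_mul]
  refine Finset.sum_le_sum fun i hi => ?_
  rw [mul_assoc, abs_mul, abs_mul, Nat.abs_cast]
  gcongr
  exact h i (by simpa [Nat.lt_succ_iff] using hi)

lemma poly_contDiff (p : Polynomial ℝ) (m : WithTop ℕ∞) :
    ContDiff ℝ m (fun x : ℝ => p.eval x) := by
  simpa using p.contDiff_aeval (𝕜 := ℝ) m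

/-- Weierstrass approximation in the `C^n` topology. -/
lemma weier (n : ℕ) : ∀ (f : ℝ → ℝ), ContDiff ℝ n f → ∀ R : ℝ, 0 ≤ R → ∀ ε : ℝ, 0 < ε →
    ∃ P : ℝ → ℝ, ContDiff ℝ (⊤ : ℕ∞) P ∧ ∀ j ≤ n, ∀ x, |x| ≤ R →
      |iteratedDeriv j f x - iteratedDeriv j P x| ≤ ε := by
  induction n with
  | zero =>
    intro f hf R hR ε hε
    obtain ⟨p, hp⟩ := exists_polynomial_near_of_continuousOn (-R) R f hf.continuous.continuousOn ε hε
    refine ⟨fun x => p.eval x, poly_contDiff p _, ?_⟩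
    intro j hj x hx
    obtain rfl : j = 0 := by omega
    rw [abs_sub_comm]
    simpa using (hp x (abs_le.1 hx)).le
  | succ n ih =>
    intro f hf R hR ε hε
    have hf' : ContDiff ℝ (n + 1) f := by exact_mod_cast hf
    obtain ⟨hfd, -, hfc⟩ := contDiff_succ_iff_deriv.1 hf'
    obtain ⟨P, hP, hPb⟩ := ih (deriv f) hfc R hR (ε / (R + 1)) (by positivity)
    let Q : ℝ → ℝ := fun x => f 0 + ∫ t in (0 : ℝ)..x, P t
    have hQd : ∀ x, HasDerivAt Q (P x) x := fun x =>
      ((hP.continuous.integral_hasStrictDerivAt 0 x).hasDerivAt).const_add _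
    have hQ' : deriv Q = P := funext fun x => (hQd x).deriv
    have hle : ε / (R + 1) ≤ ε := div_le_self hε.le (by linarith)
    refine ⟨Q, contDiff_infty_iff_deriv.2 ⟨fun x => (hQd x).differentiableAt, by rwa [hQ']⟩, ?_⟩
    intro j hj x hx
    rcases j with _ | j
    · have hQ0 : Q 0 = f 0 := by simp [Q]
      have := (convex_closedBall (0 : ℝ) R).norm_image_sub_le_of_norm_deriv_le (𝕜 := ℝ)
        (f := fun x => f x - Q x) (C := ε / (R + 1)) (x := 0) (y := x)
        (fun y _ => (hfd y).sub (hQd y).differentiableAt)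
        (fun y hy => by
          rw [deriv_fun_sub (hfd y) (hQd y).differentiableAt, hQ']
          simpa using hPb 0 (by omega) y (by simpa using hy))
        (by simpa using hR) (by simpa using hx)
      simp only [hQ0, sub_self, sub_zero, Real.norm_eq_abs] at this
      simp only [iteratedDeriv_zero]
      calc _ ≤ _ := this
        _ ≤ ε / (R + 1) * (R + 1) := by gcongr; linarith
        _ = ε := by field_simp
    · rw [iteratedDeriv_succ', iteratedDeriv_succ', hQ']
      exact (hPb j (by omega) x hx).trans hle

lemma bdd_iter {u : ℝ → ℝ} {n : ℕ} (hu : ContDiff ℝ n u) (R : ℝ) :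
    ∃ C : ℝ, 0 < C ∧ ∀ j ≤ n, ∀ x, |x| ≤ R → |iteratedDeriv j u x| ≤ C := by
  have : ∀ j ≤ n, ∃ C : ℝ, ∀ x ∈ Metric.closedBall (0 : ℝ) R, ‖iteratedDeriv j u x‖ ≤ C :=
    fun j hj => (isCompact_closedBall (0 : ℝ) R).exists_bound_of_continuousOn
      (hu.continuous_iteratedDeriv j (by exact_mod_cast hj)).continuousOn
  choose! C hC using this
  refine ⟨1 + ∑ j ∈ Finset.range (n + 1), |C j|, by positivity, ?_⟩
  intro j hj x hx
  have h1 := hC j hj x (by simpa using hx)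
  have h2 := Finset.single_le_sum (f := fun j => |C j|) (fun i _ => abs_nonneg _)
    (Finset.mem_range.2 (Nat.lt_succ_of_le hj))
  have := le_abs_self (C j)
  simp only [Real.norm_eq_abs] at h1 h2
  linarith

/-- Approximation in `C^n` with interpolation at finitely many points. -/
lemma weier_interp (n : ℕ) (f : ℝ → ℝ) (hf : ContDiff ℝ n f) (T : Finset ℝ) (R : ℝ)
    (ε : ℝ) (hε : 0 < ε) :
    ∃ P : ℝ → ℝ, ContDiff ℝ (⊤ : ℕ∞) P ∧ (∀ t ∈ T, P t = f t) ∧ ∀ j ≤ n, ∀ x, |x| ≤ R →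
      |iteratedDeriv j f x - iteratedDeriv j P x| ≤ ε := by
  classical
  let L : ℝ → ℝ → ℝ := fun t x => (Lagrange.basis T id t).eval x
  have hL : ∀ t, ContDiff ℝ (⊤ : ℕ∞) (L t) := fun t => poly_contDiff _ _
  have hLn : ∀ t, ContDiff ℝ n (L t) := fun t => poly_contDiff _ _
  choose C hC0 hC using fun t => bdd_iter (hLn t) R
  let R' := |R| + ∑ t ∈ T, |t|
  have hR' : R ≤ R' := (le_abs_self R).trans (le_add_of_nonneg_right (Finset.sum_nonneg fun _ _ => abs_nonneg _))
  have hTR : ∀ t ∈ T, |t| ≤ R' := fun t ht =>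
    (Finset.single_le_sum (f := fun t : ℝ => |t|) (fun i _ => abs_nonneg _) ht).trans
      (le_add_of_nonneg_left (abs_nonneg _))
  let S := ∑ t ∈ T, C t
  have hS : 0 ≤ S := Finset.sum_nonneg fun t _ => (hC0 t).le
  obtain ⟨P, hP, hPb⟩ := weier n f hf R' (by positivity) (ε / (1 + S)) (by positivity)
  have hPn : ContDiff ℝ n P := hP.of_le (by exact_mod_cast le_top)
  have hsum : ∀ m : WithTop ℕ∞, (∀ t, ContDiff ℝ m (L t)) →
    ContDiff ℝ m (fun x => ∑ t ∈ T, (f t - P t) * L t x) := fun m h =>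
      ContDiff.sum fun t _ => contDiff_const.mul (h t)
  refine ⟨P + fun x => ∑ t ∈ T, (f t - P t) * L t x, hP.add (hsum _ hL), ?_, ?_⟩
  · intro s hs
    have : ∑ t ∈ T, (f t - P t) * L t s = f s - P s := by
      rw [Finset.sum_eq_single s]
      · have := Lagrange.eval_basis_self (s := T) (v := id) (i := s) (Function.injective_id.injOn) hs
        simp only [id] at this
        simp [L, this]
      · intro t ht hts
        have := Lagrange.eval_basis_of_ne (s := T) (v := id) (i := t) (j := s) hts hs
        simp only [id] at this
        simp [L, this]
      · exact fun h => absurd hs h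
    simp [this]
  · intro j hj x hx
    have hjn : (j : WithTop ℕ∞) ≤ n := by exact_mod_cast hj
    rw [iteratedDeriv_add (hPn.of_le hjn).contDiffAt ((hsum _ hLn).of_le hjn).contDiffAt,
      iteratedDeriv_fun_sum (fun t _ => ((contDiff_const.mul (hLn t)).of_le hjn).contDiffAt)]
    have e1 : ∀ t, iteratedDeriv j (fun x => (f t - P t) * L t x) x
        = (f t - P t) * iteratedDeriv j (L t) x := fun t => by
      rw [iteratedDeriv_const_mul_field]
    simp only [e1]
    have h1 := hPb j hj x (hx.trans hR')
    have h2 : |∑ t ∈ T, (f t - P t) * iteratedDeriv j (L t) x| ≤ ε / (1 + S) * S := by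
      refine (Finset.abs_sum_le_sum_abs _ _).trans ?_
      rw [Finset.mul_sum]
      refine Finset.sum_le_sum fun t ht => ?_
      rw [abs_mul]
      have := hPb 0 (by omega) t (hTR t ht)
      simp only [iteratedDeriv_zero] at this
      exact mul_le_mul this (hC t j hj x hx) (abs_nonneg _) (by positivity)
    rw [← sub_sub]
    refine (abs_sub _ _).trans ((add_le_add h1 h2).trans (le_of_eq ?_))
    field_simp

/-- A smooth bump supported in `[-1, 1]` whose integer translates sum to one. -/
noncomputable def gridBump (t : ℝ) : ℝ := Real.smoothTransition (t + 1) - Real.smoothTransition t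

lemma gridBump_contDiff (m : ℕ∞) : ContDiff ℝ m gridBump :=
  (Real.smoothTransition.contDiff.comp (contDiff_id.add contDiff_const)).sub
    Real.smoothTransition.contDiff

lemma gridBump_zero {t : ℝ} (ht : 1 ≤ |t|) : gridBump t = 0 := by
  unfold gridBump
  rcases le_abs.1 ht with h | h
  · rw [Real.smoothTransition.one_of_one_le h, Real.smoothTransition.one_of_one_le (by linarith),
      sub_self]
  · rw [Real.smoothTransition.zero_of_nonpos (by linarith),
      Real.smoothTransition.zero_of_nonpos (by linarith), sub_self]

lemma gridBump_iter_zero {t : ℝ} (ht : 1 < |t|) (j : ℕ) : iteratedDeriv j gridBump t = 0 := by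
  have : gridBump =ᶠ[𝓝 t] fun _ => 0 := by
    have ho : IsOpen {s : ℝ | 1 < |s|} := isOpen_lt continuous_const continuous_abs
    filter_upwards [ho.mem_nhds ht] with s hs
    exact gridBump_zero (le_of_lt hs)
  rw [this.iteratedDeriv_eq]
  simp [iteratedDeriv_fun_const_zero]

lemma gridBump_sum (t : ℝ) (N : ℕ) (ht : |t| ≤ N) :
    ∑ k ∈ Finset.Icc (-(N : ℤ)) N, gridBump (t - k) = 1 := by
  have key : ∀ M : ℕ, ∑ k ∈ Finset.Icc (-(M : ℤ)) M, gridBump (t - k)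
      = Real.smoothTransition (t + M + 1) - Real.smoothTransition (t - M) := by
    intro M
    induction M with
    | zero => simp [gridBump]
    | succ M ih =>
      have e : Finset.Icc (-((M + 1 : ℕ) : ℤ)) ((M + 1 : ℕ) : ℤ)
          = insert (-((M + 1 : ℕ) : ℤ)) (insert ((M + 1 : ℕ) : ℤ) (Finset.Icc (-(M : ℤ)) M)) := by
        ext k; simp only [Finset.mem_Icc, Finset.mem_insert]; omega
      rw [e, Finset.sum_insert (by simp only [Finset.mem_Icc, Finset.mem_insert]; omega),
        Finset.sum_insert (by simp only [Finset.mem_Icc]; omega), ih]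
      simp only [gridBump]
      push_cast
      rw [show t - -((M : ℝ) + 1) + 1 = t + (M + 1) + 1 by ring,
        show t - -((M : ℝ) + 1) = t + M + 1 by ring,
        show t - ((M : ℝ) + 1) + 1 = t - M by ring]
      ring
  rw [key, Real.smoothTransition.one_of_one_le (by linarith [(abs_le.1 ht).1]),
    Real.smoothTransition.zero_of_nonpos (by linarith [(abs_le.1 ht).2]), sub_zero]

lemma cutoff (A : Set ℝ) (n : ℕ) : ∃ C : ℝ, 0 < C ∧ ∀ R : ℝ, ∀ δ : ℝ, 0 < δ →
    ∃ (χ : ℝ → ℝ) (L : Set ℝ), ContDiff ℝ (⊤ : ℕ∞) χ ∧ IsCompact L ∧ (∀ x, x ∉ L → χ x = 0) ∧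
      (∀ p ∈ A, p ∉ L) ∧ ∀ j ≤ n, ∀ x, |x| ≤ R →
        |iteratedDeriv j (fun y => 1 - χ y) x| ≤ C * (δ⁻¹) ^ j ∧
        (iteratedDeriv j (fun y => 1 - χ y) x ≠ 0 → ∃ p ∈ A, |x - p| ≤ 3 * δ) := by
  classical
  obtain ⟨C, hC0, hC⟩ := bdd_iter (gridBump_contDiff (n : ℕ∞)) 1
  have hCall : ∀ j ≤ n, ∀ t, |iteratedDeriv j gridBump t| ≤ C := by
    intro j hj t
    rcases le_or_gt |t| 1 with h | h
    · exact hC j hj t h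
    · rw [gridBump_iter_zero h]; simpa using hC0.le
  refine ⟨3 * C, by positivity, ?_⟩
  intro R δ hδ
  obtain ⟨N, hN⟩ := exists_nat_gt (δ⁻¹ * R)
  let I := Finset.Icc (-(N : ℤ)) N
  let near : ℤ → Prop := fun k => ∃ p ∈ A, |δ * k - p| ≤ 2 * δ
  let b : ℤ → ℝ → ℝ := fun k x => gridBump (δ⁻¹ * x - k)
  have hb : ∀ m : ℕ∞, ∀ k, ContDiff ℝ m (b k) := fun m k =>
    (gridBump_contDiff m).comp ((contDiff_const.mul contDiff_id).sub contDiff_const)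
  have hbd : ∀ j k x, iteratedDeriv j (b k) x
      = (δ⁻¹) ^ j * iteratedDeriv j gridBump (δ⁻¹ * x - k) := by
    intro j k x
    have h1 : ContDiff ℝ j (fun y => gridBump (y - k)) :=
      (gridBump_contDiff (j : ℕ∞)).comp (contDiff_id.sub contDiff_const)
    have h2 := congrFun (iteratedDeriv_comp_const_mul h1 δ⁻¹) x
    have h3 := congrFun (iteratedDeriv_comp_sub_const j gridBump (k : ℝ)) (δ⁻¹ * x)
    rw [← h3, ← h2]
  have hsc : ∀ (x : ℝ) (k : ℤ), δ⁻¹ * x - k = δ⁻¹ * (x - δ * k) := by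
    intro x k; field_simp
  have habs : ∀ (x : ℝ) (k : ℤ), |δ⁻¹ * x - k| = δ⁻¹ * |x - δ * k| := by
    intro x k
    rw [hsc, abs_mul, abs_of_pos (inv_pos.2 hδ)]
  let S := I.filter (fun k => ¬ near k)
  let B := I.filter near
  refine ⟨fun x => ∑ k ∈ S, b k x, ⋃ k ∈ S, Metric.closedBall (δ * k) δ,
    ContDiff.sum fun k _ => hb _ k, S.isCompact_biUnion fun k _ => isCompact_closedBall _ _,
    ?_, ?_, ?_⟩
  · intro x hx
    refine Finset.sum_eq_zero fun k hk => ?_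
    have hx' : x ∉ Metric.closedBall (δ * (k : ℝ)) δ := fun h => hx (mem_biUnion hk h)
    rw [Metric.mem_closedBall, Real.dist_eq, not_le] at hx'
    apply gridBump_zero
    rw [habs, ← div_eq_inv_mul, one_le_div hδ]
    exact hx'.le
  · intro p hp hpL
    obtain ⟨k, hk, hpk⟩ := mem_iUnion₂.1 hpL
    refine (Finset.mem_filter.1 hk).2 ⟨p, hp, ?_⟩
    rw [Metric.mem_closedBall, Real.dist_eq, abs_sub_comm] at hpk
    linarith
  · intro j hj x hx
    have hev : (fun y => 1 - ∑ k ∈ S, b k y) =ᶠ[𝓝 x] fun y => ∑ k ∈ B, b k y := by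
      have ho : IsOpen {y : ℝ | |δ⁻¹ * y| < N} :=
        isOpen_lt (continuous_abs.comp (continuous_const.mul continuous_id)) continuous_const
      have hxm : x ∈ {y : ℝ | |δ⁻¹ * y| < N} := by
        change |δ⁻¹ * x| < N
        rw [abs_mul, abs_of_pos (inv_pos.2 hδ)]
        exact (mul_le_mul_of_nonneg_left hx (inv_pos.2 hδ).le).trans_lt hN
      filter_upwards [ho.mem_nhds hxm] with y hy
      have h1 := gridBump_sum (δ⁻¹ * y) N (le_of_lt hy)
      have h2 := Finset.sum_filter_add_sum_filter_not I near (fun k => b k y)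
      change ∑ k ∈ B, b k y + ∑ k ∈ S, b k y = ∑ k ∈ I, b k y at h2
      change ∑ k ∈ I, b k y = 1 at h1
      linarith
    rw [hev.iteratedDeriv_eq, iteratedDeriv_fun_sum (fun k _ => (hb (j : ℕ∞) k).contDiffAt)]
    have hz : ∀ k : ℤ, 1 < |δ⁻¹ * x - k| → iteratedDeriv j (b k) x = 0 := fun k hk => by
      rw [hbd, gridBump_iter_zero hk, mul_zero]
    constructor
    · let t := δ⁻¹ * x
      let J := Finset.Icc (⌊t⌋ - 1) (⌊t⌋ + 1)
      have hJ : ∀ k : ℤ, k ∉ J → 1 < |δ⁻¹ * x - k| := by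
        intro k hk
        by_contra hcon
        rw [not_lt, abs_le] at hcon
        apply hk
        have f1 := Int.floor_le t
        have f2 := Int.lt_floor_add_one t
        have a1 : (k : ℝ) < ⌊t⌋ + 2 := by
          have : t - k ≥ -1 := hcon.1
          linarith
        have a2 : (⌊t⌋ : ℝ) ≤ k + 1 := by
          have : t - k ≤ 1 := hcon.2
          linarith
        have a1' : k < ⌊t⌋ + 2 := by exact_mod_cast a1
        have a2' : ⌊t⌋ ≤ k + 1 := by exact_mod_cast a2
        rw [Finset.mem_Icc]
        omega
      have hcard : J.card = 3 := by
        simp only [J, Int.card_Icc]; omega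
      calc |∑ k ∈ B, iteratedDeriv j (b k) x| ≤ ∑ k ∈ B, |iteratedDeriv j (b k) x| :=
            Finset.abs_sum_le_sum_abs _ _
        _ = ∑ k ∈ B ∩ J, |iteratedDeriv j (b k) x| := by
            symm
            apply Finset.sum_subset Finset.inter_subset_left
            intro k hk hk'
            rw [hz k (hJ k fun h => hk' (Finset.mem_inter.2 ⟨hk, h⟩)), abs_zero]
        _ ≤ ∑ k ∈ J, |iteratedDeriv j (b k) x| :=
            Finset.sum_le_sum_of_subset_of_nonneg Finset.inter_subset_right
              fun _ _ _ => abs_nonneg _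
        _ ≤ ∑ k ∈ J, C * (δ⁻¹) ^ j := by
            refine Finset.sum_le_sum fun k _ => ?_
            rw [hbd, abs_mul, abs_of_pos (by positivity), mul_comm]
            exact mul_le_mul_of_nonneg_right (hCall j hj _) (by positivity)
        _ = 3 * C * (δ⁻¹) ^ j := by
            rw [Finset.sum_const, hcard]; simp; ring
    · intro hne
      obtain ⟨k, hk, hk0⟩ := Finset.exists_ne_zero_of_sum_ne_zero hne
      have h1 : |δ⁻¹ * x - k| ≤ 1 := by
        by_contra hcon
        exact hk0 (hz k (not_le.1 hcon))
      rw [habs, ← div_eq_inv_mul, div_le_one hδ] at h1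
      obtain ⟨p, hp, hpk⟩ := (Finset.mem_filter.1 hk).2
      refine ⟨p, hp, ?_⟩
      calc |x - p| ≤ |x - δ * k| + |δ * k - p| := abs_sub_le _ _ _
        _ ≤ 3 * δ := by linarith

/-- Reducedness of the spectrum of vanishing ideals: if `K ⊆ ℝ`, `n ∈ ℕ`, and
`f ∈ C^(2n+1)(ℝ)` vanishes on `K`, then for every `ε > 0` there is `g ∈ C^∞(ℝ)`
vanishing on `K` with `sup_{j ≤ n, |x| ≤ n} |f^{(j)} x - g^{(j)} x| < ε`. -/
theorem stmt_17 (K : Set ℝ) (n : ℕ) (f : ℝ → ℝ)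
    (hf : ContDiff ℝ ((2 * n + 1 : ℕ) : ℕ∞) f) (hfK : ∀ x ∈ K, f x = 0) :
    ∀ ε : ℝ, 0 < ε → ∃ g : ℝ → ℝ, ContDiff ℝ (⊤ : ℕ∞) g ∧ (∀ x ∈ K, g x = 0) ∧
      ∀ j ≤ n, ∀ x : ℝ, |x| ≤ (n : ℝ) →
        |iteratedDeriv j f x - iteratedDeriv j g x| < ε := by
  intro ε hε
  have hf1 : ContDiff ℝ (n + 1 : ℕ) f := hf.of_le (by exact_mod_cast (by omega))
  have hfn : ContDiff ℝ n f := hf1.of_le (by exact_mod_cast (by omega))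
  let A : Set ℝ := {p | AccPt p (𝓟 K)}
  have hflat : ∀ p ∈ A, ∀ i ≤ n, iteratedDeriv i f p = 0 := fun p hp => acc_flat hf1 hfK hp
  obtain ⟨C, hC0, hcut⟩ := cutoff A n
  obtain ⟨M, hM0, hM⟩ := bdd_iter hf1 (n + 6)
  -- choice of the scale
  let D : ℝ := 2 ^ n * (C * (M * 3 ^ (n + 1)))
  have hD : 0 < D := by positivity
  obtain ⟨δ, hδ, hδ1, hδε⟩ : ∃ δ : ℝ, 0 < δ ∧ δ ≤ 1 ∧ D * δ ≤ ε / 3 := by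
    refine ⟨min 1 (ε / 3 / D), by positivity, min_le_left _ _, ?_⟩
    calc D * min 1 (ε / 3 / D) ≤ D * (ε / 3 / D) := by gcongr; exact min_le_right _ _
      _ = ε / 3 := by field_simp
  obtain ⟨χ, L, hχ, hLc, hχL, hAL, hχb⟩ := hcut n δ hδ
  have hχn : ContDiff ℝ n χ := hχ.of_le (by exact_mod_cast le_top)
  have hfin : (K ∩ L).Finite := by
    by_contra hinf
    obtain ⟨p, hpL, hp⟩ := Set.Infinite.exists_accPt_of_subset_isCompact hinf hLc inter_subset_right
    exact hAL p (hp.mono (principal_mono.2 inter_subset_left)) hpL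
  obtain ⟨C₂, hC₂0, hC₂⟩ := bdd_iter hχn n
  obtain ⟨Q, hQ, hQT, hQb⟩ := weier_interp n f hfn hfin.toFinset n (ε / 3 / (2 ^ n * C₂))
    (by positivity)
  have hQn : ContDiff ℝ n Q := hQ.of_le (by exact_mod_cast le_top)
  refine ⟨χ * Q, hχ.mul hQ, ?_, ?_⟩
  · intro x hx
    by_cases hxL : x ∈ L
    · simp [hQT x (by simpa using ⟨hx, hxL⟩), hfK x hx]
    · simp [hχL x hxL]
  · intro j hj x hx
    have hjn : (j : WithTop ℕ∞) ≤ n := by exact_mod_cast hj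
    have hfj := hfn.of_le hjn
    have hχj := hχn.of_le hjn
    have hQj := hQn.of_le hjn
    have hχ1 : ContDiff ℝ j (fun y => 1 - χ y) := contDiff_const.sub hχj
    have hdec : f - χ * Q = (fun y => 1 - χ y) * f + χ * (f - Q) := by
      ext y; simp only [Pi.sub_apply, Pi.mul_apply, Pi.add_apply]; ring
    have m1 : ContDiff ℝ j (χ * Q) := hχj.mul hQj
    have m2 : ContDiff ℝ j ((fun y => 1 - χ y) * f) := hχ1.mul hfj
    have m3 : ContDiff ℝ j (χ * (f - Q)) := hχj.mul (hfj.sub hQj)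
    rw [← iteratedDeriv_sub hfj.contDiffAt m1.contDiffAt, hdec,
      iteratedDeriv_add m2.contDiffAt m3.contDiffAt]
    have h2j : (2 : ℝ) ^ j ≤ 2 ^ n := pow_le_pow_right₀ (by norm_num) hj
    have b1 : |iteratedDeriv j ((fun y => 1 - χ y) * f) x| ≤ ε / 3 := by
      refine (leib hχ1 hfj (c := C * (M * 3 ^ (n + 1)) * δ) ?_).trans ?_
      · intro i hi
        obtain ⟨q1, q2⟩ := hχb i (hi.trans hj) x hx
        by_cases h0 : iteratedDeriv i (fun y => 1 - χ y) x = 0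
        · rw [h0, abs_zero, zero_mul]; positivity
        · obtain ⟨p, hp, hxp⟩ := q2 h0
          have hT := taylor_bound hf1 (p := p) (r := 3 * δ) (M := M) (by positivity) hM0.le
            (hflat p hp) (fun y hy => hM (n + 1) le_rfl y (by
              have e1 : |y| ≤ |y - p| + |p - x| + |x| := by
                have := abs_add_three (y - p) (p - x) x
                simpa using this
              rw [abs_sub_comm p x] at e1
              linarith)) (n + 1 - (j - i)) (by omega) x hxp
          rw [show n + 1 - (n + 1 - (j - i)) = j - i by omega] at hT
          obtain ⟨d, hd⟩ : ∃ d, n + 1 - (j - i) = i + 1 + d := ⟨n - j, by omega⟩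
          rw [hd] at hT
          calc _ ≤ (C * (δ⁻¹) ^ i) * (M * (3 * δ) ^ (i + 1 + d)) :=
                mul_le_mul q1 hT (abs_nonneg _) (by positivity)
            _ = C * (M * 3 ^ (i + 1 + d)) * δ * δ ^ d := by
                rw [mul_pow, pow_add δ, pow_succ δ, inv_pow]; field_simp
            _ ≤ C * (M * 3 ^ (n + 1)) * δ * 1 := by
                have : δ ^ d ≤ 1 := pow_le_one₀ hδ.le hδ1
                have h3 : (3 : ℝ) ^ (i + 1 + d) ≤ 3 ^ (n + 1) :=
                  pow_le_pow_right₀ (by norm_num) (by omega)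
                gcongr
            _ = _ := mul_one _
      · calc _ ≤ 2 ^ n * (C * (M * 3 ^ (n + 1)) * δ) := by gcongr
          _ = D * δ := by ring
          _ ≤ ε / 3 := hδε
    have b2 : |iteratedDeriv j (χ * (f - Q)) x| ≤ ε / 3 := by
      refine (leib (v := f - Q) hχj (hfj.sub hQj) (c := C₂ * (ε / 3 / (2 ^ n * C₂))) ?_).trans ?_
      · intro i hi
        have hle : ((j - i : ℕ) : WithTop ℕ∞) ≤ n := by exact_mod_cast (by omega)
        rw [iteratedDeriv_sub (hfn.of_le hle).contDiffAt (hQn.of_le hle).contDiffAt]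
        exact mul_le_mul (hC₂ i (hi.trans hj) x hx) (hQb (j - i) (by omega) x hx)
          (abs_nonneg _) hC₂0.le
      · calc _ ≤ 2 ^ n * (C₂ * (ε / 3 / (2 ^ n * C₂))) := by gcongr
          _ = ε / 3 := by field_simp
    calc _ ≤ _ := abs_add_le _ _
      _ ≤ ε / 3 + ε / 3 := add_le_add b1 b2
      _ < ε := by linarith
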